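/- arXiv:0811.0965 — 2 statements merged into one kernel-verified Lean document; each statement's English description precedes it below -/
import Mathlib

section
/- If f : ℍ → ℍ is a bijection such that both f and its inverse f⁻¹ are regular on all of ℍ (i.e. each is given by an everywhere-convergent power series ∑_{n≥0} qⁿaₙ), then f is a regular affine transformation: f(q) = qa + b for some a, b ∈ ℍ with a ≠ 0. Hence the group Aut(ℍ) of biregular self-maps of ℍ coincides with the group of regular affine transformations. -/
open Quaternion

/-!
On each slice `x + yJ` a regular function has the form `α + Jβ`, where `α`, `β` do not depend on the
imaginary unit `J`. For `b ∈ ℍ` the function `N = ‖α - b‖² - ‖β‖² + 2i⟪α - b, β⟫` is entire in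
`x + iy`, equals `‖f - b‖²` on the real axis, and satisfies `‖f(x + yJ) - b‖² ≤ |N(x + iy)|` for a
suitable `J`. If `f` is injective and proper and `b = f(x₀)` with `x₀` real, then `N` vanishes only
at `x₀` and tends to infinity, so `N = C(z - x₀)ᵐ`. On the real axis, symmetry of the distance
`‖f(x) - f(x₀)‖` makes `m` even and `C` invariant under `x₀ ↦ x₀ + 1`; the triangle inequality for
three consecutive points then gives `2ᵐ ≤ 4`, so `m = 2`, and by symmetry again `C` does not depend
on `x₀`. Hence `f` is affine on `ℝ`, and a regular function is determined by its values there.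
-/

open Filter Bornology Asymptotics Topology
open scoped RealInnerProductSpace

section PowerSeries

variable {𝕜 E : Type*} [NontriviallyNormedField 𝕜] [NormedAddCommGroup E] [NormedSpace 𝕜 E]
  {a b : ℕ → E} {u : 𝕜 → E}

theorem hasFPowerSeriesOnBall_top_of_hasSum (h : ∀ x, HasSum (fun n ↦ x ^ n • a n) (u x)) :
    HasFPowerSeriesOnBall u (fun n ↦ ContinuousMultilinearMap.mkPiRing 𝕜 (Fin n) (a n)) 0 ⊤ where
  r_le := by
    refine ENNReal.le_of_forall_nnreal_lt fun r _ ↦ ?_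
    obtain ⟨x, hrx⟩ := NormedField.exists_lt_norm 𝕜 r
    obtain ⟨C, hC⟩ := (h x).summable.tendsto_atTop_zero.norm.bddAbove_range
    refine FormalMultilinearSeries.le_radius_of_bound _ C fun n ↦ ?_
    calc ‖ContinuousMultilinearMap.mkPiRing 𝕜 (Fin n) (a n)‖ * (r : ℝ) ^ n
        ≤ ‖a n‖ * ‖x‖ ^ n := by rw [ContinuousMultilinearMap.norm_mkPiRing]; gcongr
      _ = ‖x ^ n • a n‖ := by rw [norm_smul, norm_pow, mul_comm]
      _ ≤ C := hC ⟨n, rfl⟩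
  r_pos := ENNReal.zero_lt_top
  hasSum {x} _ := by simpa using h x

theorem coeff_unique_of_hasSum (ha : ∀ x, HasSum (fun n ↦ x ^ n • a n) (u x))
    (hb : ∀ x, HasSum (fun n ↦ x ^ n • b n) (u x)) : a = b := by
  have heq := (hasFPowerSeriesOnBall_top_of_hasSum ha).hasFPowerSeriesAt.eq_formalMultilinearSeries
    (hasFPowerSeriesOnBall_top_of_hasSum hb).hasFPowerSeriesAt
  funext n
  simpa using congrArg (fun p ↦ p n fun _ ↦ (1 : 𝕜)) heq

theorem differentiable_of_hasSum [CompleteSpace E]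
    (h : ∀ x, HasSum (fun n ↦ x ^ n • a n) (u x)) : Differentiable 𝕜 u := by
  simpa [differentiableOn_univ] using (hasFPowerSeriesOnBall_top_of_hasSum h).differentiableOn

end PowerSeries

section EntireFunctions

theorem differentiable_dslope {h : ℂ → ℂ} (hh : Differentiable ℂ h) (z₀ : ℂ) :
    Differentiable ℂ (dslope h z₀) := by
  rw [← differentiableOn_univ] at hh ⊢
  exact (Complex.differentiableOn_dslope univ_mem).2 hh

theorem differentiable_iterate_dslope {h : ℂ → ℂ} (hh : Differentiable ℂ h) (z₀ : ℂ) (n : ℕ) :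
    Differentiable ℂ ((Function.swap dslope z₀)^[n] h) := by
  induction n generalizing h with
  | zero => exact hh
  | succ _ ih => exact ih (differentiable_dslope hh z₀)

theorem exists_eq_pow_mul_of_exists_ne_zero {h : ℂ → ℂ} (hh : Differentiable ℂ h)
    (hne : ∃ z, h z ≠ 0) (z₀ : ℂ) :
    ∃ (m : ℕ) (k : ℂ → ℂ), Differentiable ℂ k ∧ k z₀ ≠ 0 ∧ ∀ z, h z = (z - z₀) ^ m * k z := by
  obtain ⟨p, hp⟩ := hh.analyticAt z₀
  have hp0 : p ≠ 0 := by
    rintro rfl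
    obtain ⟨z, hz⟩ := hne
    have hzero : h = 0 := AnalyticOnNhd.eq_of_eventuallyEq (fun w _ ↦ hh.analyticAt w)
      analyticOnNhd_const hp.eventually_eq_zero
    exact hz (congrFun hzero z)
  exact ⟨p.order, _, differentiable_iterate_dslope hh z₀ p.order,
    hp.iterate_dslope_fslope_ne_zero hp0, hp.eq_pow_order_mul_iterate_dslope⟩

theorem isLittleO_dslope_of_isLittleO_pow_succ {p : ℂ → ℂ} {m : ℕ}
    (hp : p =o[cobounded ℂ] fun z ↦ z ^ (m + 1)) :
    dslope p 0 =o[cobounded ℂ] fun z ↦ z ^ m := by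
  have hconst : (fun _ ↦ p 0) =o[cobounded ℂ] fun z : ℂ ↦ z ^ (m + 1) :=
    isLittleO_const_left.2 <| .inr <| by
      simpa [Function.comp_def] using
        (tendsto_pow_atTop m.succ_ne_zero).comp (tendsto_norm_cobounded_atTop (E := ℂ))
  have hdiv := (isBigO_refl (fun z : ℂ ↦ z⁻¹) (cobounded ℂ)).mul_isLittleO (hp.sub hconst)
  have hne : ∀ᶠ z : ℂ in cobounded ℂ, z ≠ 0 := eventually_ne_cobounded 0
  refine hdiv.congr' ?_ ?_
  · filter_upwards [hne] with z hz
    rw [dslope_of_ne _ hz, slope_def_field, sub_zero, div_eq_inv_mul]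
  · filter_upwards [hne] with z hz
    rw [pow_succ', inv_mul_cancel_left₀ hz]

theorem exists_polynomial_of_isLittleO_pow {p : ℂ → ℂ} {m : ℕ} (hp : Differentiable ℂ p)
    (hgrowth : p =o[cobounded ℂ] fun z ↦ z ^ m) :
    ∃ P : Polynomial ℂ, ∀ z, p z = P.eval z := by
  induction m generalizing p with
  | zero =>
    have hlim : Tendsto p (cocompact ℂ) (𝓝 0) := by
      simpa [← Metric.cobounded_eq_cocompact] using hgrowth
    exact ⟨0, fun z ↦ by simpa using hp.apply_eq_of_tendsto_cocompact z hlim⟩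
  | succ m ih =>
    obtain ⟨P, hP⟩ :=
      ih (differentiable_dslope hp 0) (isLittleO_dslope_of_isLittleO_pow_succ hgrowth)
    refine ⟨Polynomial.C (p 0) + Polynomial.X * P, fun z ↦ ?_⟩
    have hslope : z * P.eval z = p z - p 0 := by
      simpa only [sub_zero, smul_eq_mul, hP] using sub_smul_dslope p 0 z
    simp [hslope]

theorem exists_eq_const_of_ne_zero_of_isLittleO_pow {p : ℂ → ℂ} {m : ℕ} (hp : Differentiable ℂ p)
    (hne : ∀ z, p z ≠ 0) (hgrowth : p =o[cobounded ℂ] fun z ↦ z ^ m) : ∃ C, ∀ z, p z = C := by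
  obtain ⟨P, hP⟩ := exists_polynomial_of_isLittleO_pow hp hgrowth
  have hdeg : P.degree = 0 := by
    by_contra hdeg
    obtain ⟨z, hz⟩ := IsAlgClosed.exists_root P hdeg
    exact hne z (by rw [hP, hz])
  refine ⟨P.coeff 0, fun z ↦ ?_⟩
  rw [hP, Polynomial.eq_C_of_degree_eq_zero hdeg, Polynomial.eval_C, Polynomial.coeff_C_zero]

theorem exists_eq_const_mul_pow_of_unique_zero {h : ℂ → ℂ} {z₀ : ℂ} (hh : Differentiable ℂ h)
    (hzero : ∀ z, h z = 0 → z = z₀) (hproper : Tendsto h (cobounded ℂ) (cobounded ℂ)) :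
    ∃ (C : ℂ) (m : ℕ), ∀ z, h z = C * (z - z₀) ^ m := by
  have hne : ∃ z, h z ≠ 0 := ⟨z₀ + 1, fun h0 ↦ by simpa using hzero _ h0⟩
  obtain ⟨m, k, hk, hk₀, hhk⟩ := exists_eq_pow_mul_of_exists_ne_zero hh hne z₀
  have hk_ne (z : ℂ) : k z ≠ 0 := fun hkz ↦
    hk₀ (hzero z (by rw [hhk, hkz, mul_zero]) ▸ hkz)
  have hgrowth : (fun z ↦ (k z)⁻¹) =o[cobounded ℂ] fun z ↦ z ^ (m + 1) := by
    have hshift : (fun z : ℂ ↦ (z - z₀) ^ m) =O[cobounded ℂ] fun z ↦ z ^ m :=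
      ((isBigO_refl _ _).sub (isLittleO_const_id_cobounded z₀).isBigO).pow m
    have hinv : (fun z ↦ (h z)⁻¹) =o[cobounded ℂ] fun z ↦ z :=
      ((tendsto_inv₀_cobounded.comp hproper).isBigO_one ℂ).trans_isLittleO
        (isLittleO_const_id_cobounded 1)
    refine (hshift.mul_isLittleO hinv).congr' ?_ (.of_forall fun z ↦ (pow_succ z m).symm)
    filter_upwards [eventually_ne_cobounded z₀] with z hz
    rw [hhk, mul_inv, mul_inv_cancel_left₀ (pow_ne_zero m (sub_ne_zero.2 hz))]
  obtain ⟨C, hC⟩ :=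
    exists_eq_const_of_ne_zero_of_isLittleO_pow (p := fun z ↦ (k z)⁻¹) (hk.inv hk_ne)
      (fun z ↦ inv_ne_zero (hk_ne z)) hgrowth
  exact ⟨C⁻¹, m, fun z ↦ by rw [hhk, ← hC z, inv_inv, mul_comm]⟩

end EntireFunctions

section Curves

theorem exponent_eq_two_of_norm_sub_sq_eq_mul_pow {E : Type*} [NormedAddCommGroup E] {u : ℝ → E}
    {C : ℝ → ℝ} {m : ℝ → ℕ} (hu : Function.Injective u)
    (hCm : ∀ y x, ‖u x - u y‖ ^ 2 = C y * (x - y) ^ m y) (y : ℝ) : m y = 2 := by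
  have hright (y : ℝ) : ‖u (y + 1) - u y‖ ^ 2 = C y := by simp [hCm]
  have hCpos (y : ℝ) : 0 < C y :=
    hright y ▸ pow_pos (norm_pos_iff.2 (sub_ne_zero.2 (hu.ne (by simp)))) 2
  have hleft (y : ℝ) : C (y + 1) * (-1) ^ m (y + 1) = C y := by
    rw [← hright y, norm_sub_rev, hCm, sub_add_cancel_left]
  have hsign (y : ℝ) : (-1 : ℝ) ^ m (y + 1) = 1 := by
    refine (neg_one_pow_eq_or ℝ _).resolve_right fun hneg ↦ ?_
    have := hleft y
    rw [hneg] at this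
    linarith [hCpos y, hCpos (y + 1)]
  have heven (y : ℝ) : Even (m y) := by
    have := hsign (y - 1)
    rwa [sub_add_cancel, neg_one_pow_eq_one_iff_even (by norm_num)] at this
  have hperiodic (y : ℝ) : C (y + 1) = C y := by simpa [hsign] using hleft y
  have hpos (y : ℝ) : m y ≠ 0 := fun hm ↦ by
    have := hCm y y
    simp [hm, (hCpos y).ne] at this
  have hle (y : ℝ) : m y ≤ 2 := by
    have hstep : ‖u (y + 1 + 1) - u (y + 1)‖ = ‖u (y + 1) - u y‖ := by
      rw [← sq_eq_sq₀ (norm_nonneg _) (norm_nonneg _), hright, hright, hperiodic]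
    have htri := norm_sub_le_norm_sub_add_norm_sub (u (y + 1 + 1)) (u (y + 1)) (u y)
    have hsq : C y * 2 ^ m y ≤ C y * 2 ^ 2 :=
      calc C y * 2 ^ m y = ‖u (y + 1 + 1) - u y‖ ^ 2 := by rw [hCm]; ring
        _ ≤ (2 * ‖u (y + 1) - u y‖) ^ 2 := by gcongr; linarith
        _ = C y * 2 ^ 2 := by rw [mul_pow, hright, mul_comm]
    exact (pow_le_pow_iff_right₀ one_lt_two).1 (le_of_mul_le_mul_left hsq (hCpos y))
  obtain ⟨k, hk⟩ := heven y
  have := hpos y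
  have := hle y
  omega

theorem exists_norm_sub_sq_eq_mul_sub_sq {E : Type*} [NormedAddCommGroup E] {u : ℝ → E}
    (hu : Function.Injective u)
    (h : ∀ y, ∃ (C : ℝ) (m : ℕ), ∀ x, ‖u x - u y‖ ^ 2 = C * (x - y) ^ m) :
    ∃ C : ℝ, ∀ x y, ‖u x - u y‖ ^ 2 = C * (x - y) ^ 2 := by
  choose C m hCm using h
  simp only [exponent_eq_two_of_norm_sub_sq_eq_mul_pow hu hCm] at hCm
  have hconst (y : ℝ) : C y = C 0 := by
    rcases eq_or_ne y 0 with rfl | hy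
    · rfl
    have hsymm : C y * y ^ 2 = C 0 * y ^ 2 := by
      rw [← neg_sq y, ← zero_sub y, ← hCm, norm_sub_rev, hCm, sub_zero, zero_sub, neg_sq]
    exact mul_right_cancel₀ (pow_ne_zero 2 hy) hsymm
  exact ⟨C 0, fun x y ↦ by rw [hCm, hconst]⟩

theorem eq_add_smul_sub_of_norm_sub_sq_eq {E : Type*} [NormedAddCommGroup E]
    [InnerProductSpace ℝ E] {u : ℝ → E} {C : ℝ}
    (h : ∀ x y, ‖u x - u y‖ ^ 2 = C * (x - y) ^ 2) (x : ℝ) :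
    u x = u 0 + x • (u 1 - u 0) := by
  have hinner : ⟪u x - u 0, u 1 - u 0⟫ = C * x := by
    have hpol := norm_sub_sq_real (u x - u 0) (u 1 - u 0)
    rw [sub_sub_sub_cancel_right, h, h, h] at hpol
    linarith
  have hzero : ‖u x - u 0 - x • (u 1 - u 0)‖ ^ 2 = 0 := by
    rw [norm_sub_sq_real, inner_smul_right, hinner, norm_smul, mul_pow, h, h, Real.norm_eq_abs,
      sq_abs]
    ring
  rw [sq_eq_zero_iff, norm_eq_zero, sub_sub] at hzero
  exact sub_eq_zero.1 hzero

end Curves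

section ComplexNormSq

variable {E : Type*} [NormedAddCommGroup E] [InnerProductSpace ℝ E]

/-- The value at `u + iv` of the `ℂ`-bilinear extension to `E ⊗ ℂ` of the squared norm of a real
inner product space `E`; the vector `u + iv` is encoded by the pair `u`, `v`. -/
noncomputable def complexNormSq (u v : E) : ℂ := ⟨‖u‖ ^ 2 - ‖v‖ ^ 2, 2 * ⟪u, v⟫⟩

theorem complexNormSq_zero_right (u : E) : complexNormSq u 0 = (‖u‖ ^ 2 : ℝ) := by
  apply Complex.ext <;> simp only [complexNormSq, norm_zero, inner_zero_right, Complex.ofReal_re,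
    Complex.ofReal_im] <;> ring

theorem norm_complexNormSq_sq (u v : E) :
    ‖complexNormSq u v‖ ^ 2 = (‖u‖ ^ 2 - ‖v‖ ^ 2) ^ 2 + (2 * ⟪u, v⟫) ^ 2 := by
  rw [← Complex.normSq_eq_norm_sq, Complex.normSq_apply, complexNormSq]
  ring

theorem complexNormSq_eq_sum_sq {ι : Type*} [Fintype ι] (e : OrthonormalBasis ι ℝ E) (u v : E) :
    complexNormSq u v = ∑ i, (⟨⟪e i, u⟫, ⟪e i, v⟫⟩ : ℂ) ^ 2 := by
  have hinner (x y : E) : ⟪x, y⟫ = ∑ i, ⟪e i, x⟫ * ⟪e i, y⟫ :=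
    (e.sum_inner_mul_inner x y).symm.trans
      (Finset.sum_congr rfl fun i _ ↦ by rw [real_inner_comm])
  apply Complex.ext
  · rw [Complex.re_sum, complexNormSq, ← real_inner_self_eq_norm_sq, ← real_inner_self_eq_norm_sq,
      hinner u u, hinner v v, ← Finset.sum_sub_distrib]
    simp only [sq, Complex.mul_re]
  · rw [Complex.im_sum, complexNormSq, hinner u v, Finset.mul_sum]
    refine Finset.sum_congr rfl fun i _ ↦ ?_
    rw [sq, Complex.mul_im]
    ring

end ComplexNormSq

section Stem

variable {E : Type*} [NormedAddCommGroup E] {c : ℕ → E}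

/-- The real part `α` of the stem function `α + iβ = ∑ zⁿ cₙ` of `q ↦ ∑ qⁿ cₙ`. -/
noncomputable def stemRe [NormedSpace ℝ E] (c : ℕ → E) (z : ℂ) : E := ∑' n, (z ^ n).re • c n

/-- The imaginary part `β` of the stem function `α + iβ = ∑ zⁿ cₙ` of `q ↦ ∑ qⁿ cₙ`. -/
noncomputable def stemIm [NormedSpace ℝ E] (c : ℕ → E) (z : ℂ) : E := ∑' n, (z ^ n).im • c n

/-- The symmetrization of `∑ qⁿ cₙ - b`, as a function on `ℂ`: the complexified squared norm of the
stem function. For quaternionic series this is the restriction to a slice of the regular product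
`(f - b) * (f - b)ᶜ`. -/
noncomputable def symmetrization [InnerProductSpace ℝ E] (c : ℕ → E) (b : E) (z : ℂ) : ℂ :=
  complexNormSq (stemRe c z - b) (stemIm c z)

section NormedSpace

variable [NormedSpace ℝ E]

theorem stemIm_ofReal (c : ℕ → E) (x : ℝ) : stemIm c x = 0 := by
  simp [stemIm, ← Complex.ofReal_pow]

variable [CompleteSpace E] (hc : ∀ r : ℝ, 0 ≤ r → Summable fun n ↦ r ^ n * ‖c n‖)
include hc

theorem hasSum_stemRe (z : ℂ) : HasSum (fun n ↦ (z ^ n).re • c n) (stemRe c z) := by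
  refine (Summable.of_norm_bounded (hc ‖z‖ (norm_nonneg z)) fun n ↦ ?_).hasSum
  rw [norm_smul, ← norm_pow]
  gcongr
  exact Complex.abs_re_le_norm _

theorem hasSum_stemIm (z : ℂ) : HasSum (fun n ↦ (z ^ n).im • c n) (stemIm c z) := by
  refine (Summable.of_norm_bounded (hc ‖z‖ (norm_nonneg z)) fun n ↦ ?_).hasSum
  rw [norm_smul, ← norm_pow]
  gcongr
  exact Complex.abs_im_le_norm _

theorem differentiable_clm_stem (l : E →L[ℝ] ℝ) :
    Differentiable ℂ fun z ↦ (⟨l (stemRe c z), l (stemIm c z)⟩ : ℂ) := by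
  refine differentiable_of_hasSum (a := fun n ↦ (l (c n) : ℂ)) fun z ↦ ?_
  rw [Complex.hasSum_iff]
  constructor
  · simpa using (hasSum_stemRe hc z).mapL l
  · simpa using (hasSum_stemIm hc z).mapL l

end NormedSpace

theorem differentiable_symmetrization [InnerProductSpace ℝ E] [FiniteDimensional ℝ E]
    (hc : ∀ r : ℝ, 0 ≤ r → Summable fun n ↦ r ^ n * ‖c n‖) (b : E) :
    Differentiable ℂ (symmetrization c b) := by
  have : CompleteSpace E := FiniteDimensional.complete ℝ E
  let e := stdOrthonormalBasis ℝ E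
  have hsum (z : ℂ) : symmetrization c b z =
      ∑ i, ((⟨⟪e i, stemRe c z⟫, ⟪e i, stemIm c z⟫⟩ : ℂ) - (⟪e i, b⟫ : ℝ)) ^ 2 := by
    simp_rw [symmetrization, complexNormSq_eq_sum_sq e, inner_sub_right]
    congr! 2
    apply Complex.ext <;> simp
  rw [funext hsum]
  exact .fun_sum fun i _ ↦
    ((differentiable_clm_stem hc (innerSL ℝ (e i))).sub_const _).pow 2

end Stem

section Slices

/- A slice of `ℍ` is encoded by an algebra homomorphism `φ : ℂ →ₐ[ℝ] ℍ`, its imaginary unit being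
`φ I`. -/

theorem exists_algHom_im_eq_norm_smul (q : ℍ) :
    ∃ φ : ℂ →ₐ[ℝ] ℍ, q.im = ‖q.im‖ • φ Complex.I := by
  rcases eq_or_ne q.im 0 with h0 | h0
  · exact ⟨Quaternion.ofComplex, by rw [h0, norm_zero, zero_smul]⟩
  have hnorm : ‖q.im‖ ≠ 0 := norm_ne_zero_iff.2 h0
  have hsq : q.im * q.im = -((‖q.im‖ * ‖q.im‖ : ℝ) : ℍ) := by
    rw [← sq, Quaternion.im_sq, Quaternion.normSq_eq_norm_mul_self]
  have hunit : (‖q.im‖⁻¹ • q.im) * (‖q.im‖⁻¹ • q.im) = -1 := by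
    rw [smul_mul_smul_comm, hsq, smul_neg, Quaternion.smul_coe, ← mul_inv,
      inv_mul_cancel₀ (mul_ne_zero hnorm hnorm), Quaternion.coe_one]
  refine ⟨Complex.lift ⟨_, hunit⟩, ?_⟩
  simp [smul_inv_smul₀ hnorm]

variable (φ : ℂ →ₐ[ℝ] ℍ)

theorem algHom_I_mul_self : φ Complex.I * φ Complex.I = -1 := by
  rw [← map_mul, Complex.I_mul_I, map_neg, map_one]

theorem re_algHom_I : (φ Complex.I).re = 0 := by
  have hnorm : ‖φ Complex.I‖ * ‖φ Complex.I‖ = 1 := by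
    rw [← norm_mul, algHom_I_mul_self, norm_neg, norm_one]
  rw [← Quaternion.sq_eq_neg_normSq, Quaternion.normSq_eq_norm_mul_self, hnorm, sq,
    algHom_I_mul_self, Quaternion.coe_one]

theorem algHom_apply_eq_re_add_im_smul (z : ℂ) : φ z = z.re + z.im • φ Complex.I := by
  conv_lhs => rw [← Complex.re_add_im z, ← Complex.real_smul, map_add, map_smul]
  rw [show φ z.re = z.re from φ.commutes z.re]

theorem star_algHom_apply (z : ℂ) : star (φ z) = φ (star z) := by
  have hI : star (φ Complex.I) = -φ Complex.I := Quaternion.star_eq_neg.2 (re_algHom_I φ)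
  rw [algHom_apply_eq_re_add_im_smul φ z, algHom_apply_eq_re_add_im_smul φ (star z)]
  simp [hI]

theorem norm_algHom_apply (z : ℂ) : ‖φ z‖ = ‖z‖ := by
  have hsq : Quaternion.normSq (φ z) = Complex.normSq z := by
    apply Quaternion.coe_injective
    rw [← Quaternion.self_mul_star, star_algHom_apply, ← map_mul, Complex.star_def,
      Complex.mul_conj]
    exact φ.commutes _
  rwa [Quaternion.normSq_eq_norm_mul_self, ← sq, Complex.normSq_eq_norm_sq,
    sq_eq_sq₀ (norm_nonneg _) (norm_nonneg _)] at hsq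

end Slices

theorem exists_norm_add_algHom_I_mul_sq_le (u v : ℍ) :
    ∃ φ : ℂ →ₐ[ℝ] ℍ, ‖u + φ Complex.I * v‖ ^ 2 ≤ ‖complexNormSq u v‖ := by
  -- Among imaginary units `J`, the direction of `(v * star u).im` minimizes `‖u + J * v‖`.
  obtain ⟨φ, hφ⟩ := exists_algHom_im_eq_norm_smul (v * star u)
  set w := v * star u
  have hinner : ⟪u, φ Complex.I * v⟫ = -‖w.im‖ :=
    calc ⟪u, φ Complex.I * v⟫ = (φ Complex.I * w).re := by
          rw [real_inner_comm, Quaternion.inner_def, mul_assoc]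
      _ = (w.re • φ Complex.I + ‖w.im‖ • (φ Complex.I * φ Complex.I)).re := by
          conv_lhs => rw [← w.re_add_im, hφ]
          rw [mul_add, Quaternion.mul_coe_eq_smul, mul_smul_comm]
      _ = -‖w.im‖ := by simp [algHom_I_mul_self, re_algHom_I]
  have hexpand : ‖u + φ Complex.I * v‖ ^ 2 = ‖u‖ ^ 2 + ‖v‖ ^ 2 - 2 * ‖w.im‖ := by
    rw [norm_add_sq_real, hinner, norm_mul, norm_algHom_apply, Complex.norm_I]
    ring
  have hpyth : ⟪u, v⟫ ^ 2 + ‖w.im‖ ^ 2 = ‖u‖ ^ 2 * ‖v‖ ^ 2 := by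
    have hw : ‖w‖ ^ 2 = w.re ^ 2 + ‖w.im‖ ^ 2 := by
      simp only [sq, ← Quaternion.normSq_eq_norm_mul_self, Quaternion.normSq_def']
      simp only [Quaternion.re_im, Quaternion.imI_im, Quaternion.imJ_im, Quaternion.imK_im]
      ring
    rw [real_inner_comm, Quaternion.inner_def, ← hw, norm_mul, norm_star]
    ring
  refine ⟨φ, (sq_le_sq₀ (by positivity) (norm_nonneg _)).1 ?_⟩
  have hnonneg : 0 ≤ ‖u + φ Complex.I * v‖ ^ 2 := by positivity
  rw [hexpand] at hnonneg ⊢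
  rw [norm_complexNormSq_sq]
  nlinarith [norm_nonneg w.im]

section Regular

variable {f : ℍ → ℍ} {c : ℕ → ℍ} (hf : ∀ q : ℍ, HasSum (fun n ↦ q ^ n * c n) (f q))
include hf

theorem summable_pow_mul_norm_coeff (r : ℝ) (hr : 0 ≤ r) : Summable fun n ↦ r ^ n * ‖c n‖ := by
  simpa [norm_mul, norm_pow, abs_of_nonneg hr] using (hf r).summable.norm

theorem isBounded_image_of_hasSum {s : Set ℍ} (hs : IsBounded s) : IsBounded (f '' s) := by
  obtain ⟨r, hr, hsr⟩ := hs.exists_pos_norm_le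
  refine isBounded_iff_forall_norm_le.2 ⟨∑' n, r ^ n * ‖c n‖, Set.forall_mem_image.2 fun q hq ↦ ?_⟩
  rw [← (hf q).tsum_eq]
  refine tsum_of_norm_bounded (summable_pow_mul_norm_coeff hf r hr.le).hasSum fun n ↦ ?_
  rw [norm_mul, norm_pow]
  gcongr
  exact hsr q hq

theorem apply_algHom_eq_stemRe_add_algHom_I_mul_stemIm (φ : ℂ →ₐ[ℝ] ℍ) (z : ℂ) :
    f (φ z) = stemRe c z + φ Complex.I * stemIm c z := by
  have hc := summable_pow_mul_norm_coeff hf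
  refine (hf _).unique
    (((hasSum_stemRe hc z).add ((hasSum_stemIm hc z).mul_left (φ Complex.I))).congr_fun fun n ↦ ?_)
  rw [← map_pow, algHom_apply_eq_re_add_im_smul φ (z ^ n), add_mul, Quaternion.coe_mul_eq_smul,
    smul_mul_assoc, mul_smul_comm]

theorem stemRe_ofReal (x : ℝ) : stemRe c x = f x := by
  obtain ⟨φ, -⟩ := exists_algHom_im_eq_norm_smul 0
  have hx : φ x = (x : ℍ) := φ.commutes x
  rw [← hx, apply_algHom_eq_stemRe_add_algHom_I_mul_stemIm hf, stemIm_ofReal, mul_zero, add_zero]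

theorem symmetrization_ofReal (b : ℍ) (x : ℝ) :
    symmetrization c b x = (‖f x - b‖ ^ 2 : ℝ) := by
  rw [symmetrization, stemRe_ofReal hf, stemIm_ofReal, complexNormSq_zero_right]

theorem exists_norm_apply_algHom_sub_sq_le (b : ℍ) (z : ℂ) :
    ∃ φ : ℂ →ₐ[ℝ] ℍ, ‖f (φ z) - b‖ ^ 2 ≤ ‖symmetrization c b z‖ := by
  obtain ⟨φ, hφ⟩ := exists_norm_add_algHom_I_mul_sq_le (stemRe c z - b) (stemIm c z)
  refine ⟨φ, ?_⟩
  rwa [apply_algHom_eq_stemRe_add_algHom_I_mul_stemIm hf, add_sub_right_comm]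

theorem eq_of_symmetrization_eq_zero (hinj : Function.Injective f) {x₀ : ℝ} {z : ℂ}
    (hz : symmetrization c (f x₀) z = 0) : z = x₀ := by
  obtain ⟨φ, hφ⟩ := exists_norm_apply_algHom_sub_sq_le hf (f x₀) z
  have heq : f (φ z) = f x₀ := by simpa [hz, sub_eq_zero] using hφ
  exact φ.toRingHom.injective ((hinj heq).trans (φ.commutes x₀).symm)

theorem tendsto_symmetrization_cobounded (hproper : Tendsto f (cobounded ℍ) (cobounded ℍ)) (b : ℍ) :
    Tendsto (symmetrization c b) (cobounded ℂ) (cobounded ℂ) := by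
  choose φ hφ using exists_norm_apply_algHom_sub_sq_le hf b
  have hslice : Tendsto (fun z ↦ φ z z) (cobounded ℂ) (cobounded ℍ) := by
    rw [← tendsto_norm_atTop_iff_cobounded]
    simpa only [norm_algHom_apply] using tendsto_norm_cobounded_atTop
  have hsub : Tendsto (fun z ↦ f (φ z z) - b) (cobounded ℂ) (cobounded ℍ) :=
    (tendsto_sub_const_cobounded b).comp (hproper.comp hslice)
  rw [← tendsto_norm_atTop_iff_cobounded] at hsub ⊢
  exact tendsto_atTop_mono hφ ((tendsto_pow_atTop two_ne_zero).comp hsub)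

theorem exists_norm_sub_sq_eq_const_mul_pow (hinj : Function.Injective f)
    (hproper : Tendsto f (cobounded ℍ) (cobounded ℍ)) (x₀ : ℝ) :
    ∃ (C : ℝ) (m : ℕ), ∀ x : ℝ, ‖f x - f x₀‖ ^ 2 = C * (x - x₀) ^ m := by
  obtain ⟨C, m, hCm⟩ := exists_eq_const_mul_pow_of_unique_zero
    (differentiable_symmetrization (summable_pow_mul_norm_coeff hf) (f x₀))
    (fun z ↦ eq_of_symmetrization_eq_zero hf hinj)
    (tendsto_symmetrization_cobounded hf hproper (f x₀))
  refine ⟨C.re, m, fun x ↦ ?_⟩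
  have hx := congrArg Complex.re ((symmetrization_ofReal hf (f x₀) x).symm.trans (hCm x))
  rwa [Complex.ofReal_re, ← Complex.ofReal_sub, ← Complex.ofReal_pow, Complex.re_mul_ofReal] at hx

theorem eq_mul_add_of_forall_ofReal {a b : ℍ} (h : ∀ x : ℝ, f x = b + x • a) (q : ℍ) :
    f q = q * a + b := by
  have haffine (q : ℍ) :
      HasSum (fun n ↦ q ^ n * (Pi.single 0 b + Pi.single 1 a : ℕ → ℍ) n) (b + q * a) := by
    simp only [Pi.add_apply, mul_add]
    refine HasSum.add ?_ ?_
    · simpa using hasSum_single (f := fun n ↦ q ^ n * (Pi.single 0 b : ℕ → ℍ) n) 0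
        fun n hn ↦ by simp [hn]
    · simpa using hasSum_single (f := fun n ↦ q ^ n * (Pi.single 1 a : ℕ → ℍ) n) 1
        fun n hn ↦ by simp [hn]
  have hcoeff : c = Pi.single 0 b + Pi.single 1 a := by
    refine coeff_unique_of_hasSum (𝕜 := ℝ) (u := fun x ↦ f x) (fun x ↦ ?_) fun x ↦ ?_
    · simpa [← Quaternion.coe_pow, Quaternion.coe_mul_eq_smul] using hf x
    · simpa [← Quaternion.coe_pow, Quaternion.coe_mul_eq_smul, h] using haffine x
  rw [(hf q).unique (hcoeff ▸ haffine q), add_comm]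

end Regular

theorem tendsto_cobounded_of_leftInverse {X Y : Type*} [Bornology X] [Bornology Y] {f : X → Y}
    {g : Y → X} (hgf : Function.LeftInverse g f) (hg : ∀ s, IsBounded s → IsBounded (g '' s)) :
    Tendsto f (cobounded X) (cobounded Y) := by
  rw [tendsto_iff_comap]
  calc cobounded X = comap f (comap g (cobounded X)) := by
        rw [comap_comap, hgf.comp_eq_id, comap_id]
    _ ≤ comap f (cobounded Y) := comap_mono (comap_cobounded_le_iff.2 fun s ↦ hg s)

theorem biregular_is_affine_general {f : ℍ → ℍ} {c : ℕ → ℍ}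
    (hf : ∀ q : ℍ, HasSum (fun n ↦ q ^ n * c n) (f q)) (hinj : Function.Injective f)
    (hproper : Tendsto f (cobounded ℍ) (cobounded ℍ)) :
    ∃ a b : ℍ, a ≠ 0 ∧ ∀ q : ℍ, f q = q * a + b := by
  let u : ℝ → ℍ := fun x ↦ f x
  have hu : Function.Injective u := hinj.comp Quaternion.coe_injective
  obtain ⟨C, hC⟩ :=
    exists_norm_sub_sq_eq_mul_sub_sq hu (exists_norm_sub_sq_eq_const_mul_pow hf hinj hproper)
  exact ⟨u 1 - u 0, u 0, sub_ne_zero.2 (hu.ne one_ne_zero),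
    eq_mul_add_of_forall_ofReal hf (eq_add_smul_sub_of_norm_sub_sq_eq hC)⟩

/-- A biregular self-map of `ℍ` (a bijection `f` such that both `f` and its inverse are
entire regular functions) is a regular affine transformation `q ↦ qa + b` with `a ≠ 0`.
Hence `Aut(ℍ)` coincides with the group of regular affine transformations. -/
theorem biregular_is_affine (f g : ℍ[ℝ] → ℍ[ℝ]) (c d : ℕ → ℍ[ℝ])
    (hf : ∀ q : ℍ[ℝ], HasSum (fun n : ℕ => q ^ n * c n) (f q))
    (hg : ∀ q : ℍ[ℝ], HasSum (fun n : ℕ => q ^ n * d n) (g q))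
    (hgf : ∀ q : ℍ[ℝ], g (f q) = q) (hfg : ∀ q : ℍ[ℝ], f (g q) = q) :
    ∃ a b : ℍ[ℝ], a ≠ 0 ∧ ∀ q : ℍ[ℝ], f q = q * a + b :=
  biregular_is_affine_general hf (Function.LeftInverse.injective hgf)
    (tendsto_cobounded_of_leftInverse hgf fun _ ↦ isBounded_image_of_hasSum hg)
end

section
/- Let A = [[a,c],[b,d]] be a 2×2 quaternionic matrix satisfying Aᴴ H A = H, where Aᴴ is the conjugate transpose and H = [[1,0],[0,−1]]. Then qc + d ≠ 0 for every q with |q| < 1, the linear fractional transformation F_A(q) = (qc+d)⁻¹(qa+b) maps the open unit ball 𝔹 = {q ∈ ℍ : |q| < 1} bijectively onto itself, and there exist u, v ∈ ℍ with |u| = |v| = 1 and α ∈ 𝔹 such that F_A(q) = v⁻¹ · (1 − q·conj(α))⁻¹ · (q − α) · u for all q ∈ 𝔹. -/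
open Quaternion Matrix

/-!
The row `(q, 1)` satisfies `(q, 1) A = (qc + d) • (F_A(q), 1)`, so `F_B ∘ F_A = F_{AB}`. A one-sided
inverse of a matrix over a division ring is two-sided, so `Aᴴ H A = H` also gives `A H Aᴴ = H`, and
evaluating the latter form at `(q, 1)` yields `|qa + b|² - |qc + d|² = |q|² - 1`: hence `F_A` maps
`𝔹` into itself, and its inverse there is the map attached to `A⁻¹ ∈ Sp(1,1)`. The normal form
factors out the zero `α = -b a⁻¹` of the numerator; the relation `a* c = b* d` says that
`c = -α* d`.
-/

section PseudoUnitary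

variable {n R : Type*} [Fintype n] [Semiring R] [StarRing R] {J A B : Matrix n n R}

/-- The matrices preserving the sesquilinear form `star v ⬝ᵥ J *ᵥ w` on column vectors; for
`J = signatureOneOne` these are the elements of `Sp(1,1)`. -/
def IsPseudoUnitary (J A : Matrix n n R) : Prop :=
  Aᴴ * J * A = J

namespace IsPseudoUnitary

lemma star_mulVec_dotProduct_mulVec (h : IsPseudoUnitary J A) (v w : n → R) :
    star (A *ᵥ v) ⬝ᵥ J *ᵥ (A *ᵥ w) = star v ⬝ᵥ J *ᵥ w := by
  simp only [star_mulVec, dotProduct_mulVec, vecMul_vecMul]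
  rw [h]

variable [DecidableEq n]

lemma of_mul_eq_one (h : IsPseudoUnitary J A) (hAB : A * B = 1) : IsPseudoUnitary J B :=
  calc Bᴴ * J * B = Bᴴ * (Aᴴ * J * A) * B := by rw [h]
    _ = (A * B)ᴴ * J * (A * B) := by simp only [conjTranspose_mul, Matrix.mul_assoc]
    _ = J := by rw [hAB, conjTranspose_one, Matrix.one_mul, Matrix.mul_one]

lemma adjoint_mul_self (h : IsPseudoUnitary J A) (hJ : J * J = 1) : J * Aᴴ * J * A = 1 := by
  rw [Matrix.mul_assoc, Matrix.mul_assoc, ← Matrix.mul_assoc Aᴴ, h, hJ]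

variable [IsStablyFiniteRing R]

lemma self_mul_adjoint (h : IsPseudoUnitary J A) (hJ : J * J = 1) : A * (J * Aᴴ * J) = 1 :=
  mul_eq_one_symm (h.adjoint_mul_self hJ)

lemma conjTranspose (h : IsPseudoUnitary J A) (hJ : J * J = 1) : IsPseudoUnitary J Aᴴ :=
  calc Aᴴᴴ * J * Aᴴ = A * (J * Aᴴ * J) * J := by
        simp only [conjTranspose_conjTranspose, Matrix.mul_assoc, hJ, Matrix.mul_one]
    _ = J := by rw [h.self_mul_adjoint hJ, Matrix.one_mul]

end IsPseudoUnitary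

end PseudoUnitary

section SignatureOneOne

variable {R : Type*} [Ring R]

/-- The matrix `H` of the indefinite form whose pseudo-unitary group over `ℍ` is `Sp(1,1)`. -/
def signatureOneOne : Matrix (Fin 2) (Fin 2) R :=
  !![1, 0; 0, -1]

lemma signatureOneOne_mul_self :
    (signatureOneOne : Matrix (Fin 2) (Fin 2) R) * signatureOneOne = 1 := by
  simp [signatureOneOne, one_fin_two]

variable [StarRing R]

lemma star_dotProduct_signatureOneOne_mulVec (v w : Fin 2 → R) :
    star v ⬝ᵥ signatureOneOne *ᵥ w = star (v 0) * w 0 - star (v 1) * w 1 := by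
  simp [signatureOneOne, dotProduct, mulVec, Fin.sum_univ_two, sub_eq_add_neg]

lemma IsPseudoUnitary.star_mul_sub_star_mul {A : Matrix (Fin 2) (Fin 2) R}
    (h : IsPseudoUnitary signatureOneOne A) (i j : Fin 2) :
    star (A 0 i) * A 0 j - star (A 1 i) * A 1 j = signatureOneOne i j := by
  have hij := h.star_mulVec_dotProduct_mulVec (Pi.single i 1) (Pi.single j 1)
  rw [star_dotProduct_signatureOneOne_mulVec] at hij
  simpa using hij

end SignatureOneOne

/-- The numerator `q a + b` of the linear fractional transformation of `A = !![a, c; b, d]`. -/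
def linearFractional.num {K : Type*} [Semiring K] (A : Matrix (Fin 2) (Fin 2) K) (q : K) : K :=
  q * A 0 0 + A 1 0

/-- The denominator `q c + d` of the linear fractional transformation of `A = !![a, c; b, d]`. -/
def linearFractional.denom {K : Type*} [Semiring K] (A : Matrix (Fin 2) (Fin 2) K) (q : K) : K :=
  q * A 0 1 + A 1 1

/-- The linear fractional transformation `F_A`. The matrix acts on the row `(q, 1)` from the right;
where the denominator vanishes the value is the junk value `0`. -/
def linearFractional {K : Type*} [DivisionRing K] (A : Matrix (Fin 2) (Fin 2) K) (q : K) : K :=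
  (linearFractional.denom A q)⁻¹ * linearFractional.num A q

namespace linearFractional

section Semiring

variable {K : Type*} [Semiring K]

lemma vecMul_eq_num_denom (A : Matrix (Fin 2) (Fin 2) K) (q : K) :
    ![q, 1] ᵥ* A = ![num A q, denom A q] := by
  ext i
  fin_cases i <;> simp [vecMul, dotProduct, num, denom]

end Semiring

section DivisionRing

variable {K : Type*} [DivisionRing K] {A B : Matrix (Fin 2) (Fin 2) K} {q : K}

lemma denom_mul_apply (h : denom A q ≠ 0) : denom A q * linearFractional A q = num A q :=
  mul_inv_cancel_left₀ h _

lemma vecMul_eq_denom_smul (h : denom A q ≠ 0) :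
    ![q, 1] ᵥ* A = denom A q • ![linearFractional A q, 1] := by
  simp [vecMul_eq_num_denom, denom_mul_apply h]

lemma num_denom_mul (h : denom A q ≠ 0) :
    ![num (A * B) q, denom (A * B) q] =
      denom A q • ![num B (linearFractional A q), denom B (linearFractional A q)] := by
  rw [← vecMul_eq_num_denom, ← vecMul_eq_num_denom, ← vecMul_vecMul, vecMul_eq_denom_smul h,
    smul_vecMul]

lemma mul_apply (h : denom A q ≠ 0) :
    linearFractional (A * B) q = linearFractional B (linearFractional A q) := by
  have hnum : num (A * B) q = denom A q * num B (linearFractional A q) :=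
    congrFun (num_denom_mul h) 0
  have hdenom : denom (A * B) q = denom A q * denom B (linearFractional A q) :=
    congrFun (num_denom_mul h) 1
  rw [linearFractional, hnum, hdenom, _root_.mul_inv_rev, mul_assoc, inv_mul_cancel_left₀ h]
  rfl

lemma one_apply (q : K) : linearFractional 1 q = q := by
  simp [linearFractional, num, denom]

lemma apply_apply_of_mul_eq_one (hAB : A * B = 1) (h : denom A q ≠ 0) :
    linearFractional B (linearFractional A q) = q := by
  rw [← mul_apply h, hAB, one_apply]

/-- The zero `α = -b a⁻¹` of the numerator of `A = !![a, c; b, d]`, and hence of `F_A`. It is a junk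
value if `a = 0`. -/
def numRoot (A : Matrix (Fin 2) (Fin 2) K) : K :=
  -(A 1 0 * (A 0 0)⁻¹)

lemma num_eq_sub_mul (ha : A 0 0 ≠ 0) (q : K) : num A q = (q - numRoot A) * A 0 0 := by
  rw [num, numRoot, sub_neg_eq_add, add_mul, inv_mul_cancel_right₀ ha]

variable [StarRing K]

lemma denom_eq_one_sub_mul (hA : IsPseudoUnitary signatureOneOne A) (ha : A 0 0 ≠ 0) (q : K) :
    denom A q = (1 - q * star (numRoot A)) * A 1 1 := by
  have hac : star (A 0 0) * A 0 1 = star (A 1 0) * A 1 1 :=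
    sub_eq_zero.1 (hA.star_mul_sub_star_mul 0 1)
  have hc : A 0 1 = star (A 1 0 * (A 0 0)⁻¹) * A 1 1 := by
    rw [star_mul, star_inv₀, mul_assoc, ← hac, inv_mul_cancel_left₀ (star_ne_zero.2 ha)]
  rw [denom, hc, numRoot, star_neg, mul_neg, sub_neg_eq_add, add_mul, one_mul, mul_assoc, add_comm]

lemma apply_eq_of_isPseudoUnitary (hA : IsPseudoUnitary signatureOneOne A) (ha : A 0 0 ≠ 0)
    (q : K) :
    linearFractional A q = (A 1 1)⁻¹ * (1 - q * star (numRoot A))⁻¹ *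
      (q - numRoot A) * A 0 0 := by
  rw [linearFractional, num_eq_sub_mul ha, denom_eq_one_sub_mul hA ha, _root_.mul_inv_rev,
    ← mul_assoc]

end DivisionRing

end linearFractional

section Quaternion

open linearFractional

variable {A : Matrix (Fin 2) (Fin 2) ℍ[ℝ]}

lemma coe_norm_sq_sub_norm_sq (x y : ℍ[ℝ]) :
    ((‖x‖ ^ 2 - ‖y‖ ^ 2 : ℝ) : ℍ[ℝ]) = star x * x - star y * y := by
  simp [Quaternion.star_mul_self, normSq_eq_norm_mul_self, sq]

namespace IsPseudoUnitary

lemma norm_sq_sub_norm_sq_mulVec (hA : IsPseudoUnitary signatureOneOne A) (v : Fin 2 → ℍ[ℝ]) :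
    ‖(A *ᵥ v) 0‖ ^ 2 - ‖(A *ᵥ v) 1‖ ^ 2 = ‖v 0‖ ^ 2 - ‖v 1‖ ^ 2 := by
  apply Quaternion.coe_injective
  simp only [coe_norm_sq_sub_norm_sq, ← star_dotProduct_signatureOneOne_mulVec]
  exact hA.star_mulVec_dotProduct_mulVec v v

lemma norm_sq_sub_norm_sq_vecMul (hA : IsPseudoUnitary signatureOneOne A) (v : Fin 2 → ℍ[ℝ]) :
    ‖(v ᵥ* A) 0‖ ^ 2 - ‖(v ᵥ* A) 1‖ ^ 2 = ‖v 0‖ ^ 2 - ‖v 1‖ ^ 2 := by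
  have h := (hA.conjTranspose signatureOneOne_mul_self).norm_sq_sub_norm_sq_mulVec (star v)
  simpa only [← star_vecMul, Pi.star_apply, Quaternion.norm_star] using h

lemma norm_num_sq_sub_norm_denom_sq (hA : IsPseudoUnitary signatureOneOne A) (q : ℍ[ℝ]) :
    ‖num A q‖ ^ 2 - ‖denom A q‖ ^ 2 = ‖q‖ ^ 2 - 1 := by
  simpa [vecMul_eq_num_denom] using hA.norm_sq_sub_norm_sq_vecMul ![q, 1]

lemma norm_num_lt_norm_denom (hA : IsPseudoUnitary signatureOneOne A) {q : ℍ[ℝ]} (hq : ‖q‖ < 1) :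
    ‖num A q‖ < ‖denom A q‖ := by
  have hq_sq : ‖q‖ ^ 2 < 1 := pow_lt_one₀ (norm_nonneg q) hq two_ne_zero
  refine lt_of_pow_lt_pow_left₀ 2 (norm_nonneg _) ?_
  linarith [hA.norm_num_sq_sub_norm_denom_sq q]

lemma denom_ne_zero (hA : IsPseudoUnitary signatureOneOne A) {q : ℍ[ℝ]} (hq : ‖q‖ < 1) :
    denom A q ≠ 0 :=
  norm_pos_iff.1 ((norm_nonneg _).trans_lt (hA.norm_num_lt_norm_denom hq))

lemma mapsTo_ball (hA : IsPseudoUnitary signatureOneOne A) :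
    Set.MapsTo (linearFractional A) (Metric.ball 0 1) (Metric.ball 0 1) := by
  intro q hq
  rw [mem_ball_zero_iff] at hq ⊢
  rw [linearFractional, norm_mul, norm_inv,
    inv_mul_lt_one₀ (norm_pos_iff.2 (hA.denom_ne_zero hq))]
  exact hA.norm_num_lt_norm_denom hq

lemma leftInvOn_ball (hA : IsPseudoUnitary signatureOneOne A) {B : Matrix (Fin 2) (Fin 2) ℍ[ℝ]}
    (hAB : A * B = 1) :
    Set.LeftInvOn (linearFractional B) (linearFractional A) (Metric.ball 0 1) :=
  fun _ hq ↦ apply_apply_of_mul_eq_one hAB (hA.denom_ne_zero (mem_ball_zero_iff.1 hq))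

lemma bijOn_ball (hA : IsPseudoUnitary signatureOneOne A) :
    Set.BijOn (linearFractional A) (Metric.ball 0 1) (Metric.ball 0 1) := by
  have hAB := hA.self_mul_adjoint signatureOneOne_mul_self
  have hB := hA.of_mul_eq_one hAB
  exact Set.InvOn.bijOn ⟨hA.leftInvOn_ball hAB, hB.leftInvOn_ball (mul_eq_one_symm hAB)⟩
    hA.mapsTo_ball hB.mapsTo_ball

lemma norm_apply_zero_zero_sq (hA : IsPseudoUnitary signatureOneOne A) :
    ‖A 0 0‖ ^ 2 = ‖A 1 0‖ ^ 2 + 1 := by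
  have hcol := hA.norm_sq_sub_norm_sq_mulVec (Pi.single 0 1)
  simpa [sub_eq_iff_eq_add'] using hcol

lemma norm_apply_one_one_sq (hA : IsPseudoUnitary signatureOneOne A) :
    ‖A 1 1‖ ^ 2 = ‖A 1 0‖ ^ 2 + 1 := by
  have hrow : ‖A 1 0‖ ^ 2 - ‖A 1 1‖ ^ 2 = -1 := by
    simpa using hA.norm_sq_sub_norm_sq_vecMul (Pi.single 1 1)
  linarith

lemma norm_apply_one_zero_lt (hA : IsPseudoUnitary signatureOneOne A) :
    ‖A 1 0‖ < ‖A 0 0‖ := by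
  refine lt_of_pow_lt_pow_left₀ 2 (norm_nonneg _) ?_
  rw [hA.norm_apply_zero_zero_sq]
  exact lt_add_one _

lemma norm_apply_one_one (hA : IsPseudoUnitary signatureOneOne A) : ‖A 1 1‖ = ‖A 0 0‖ := by
  refine (pow_left_inj₀ (norm_nonneg _) (norm_nonneg _) two_ne_zero).1 ?_
  rw [hA.norm_apply_one_one_sq, hA.norm_apply_zero_zero_sq]

lemma exists_linearFractional_eq (hA : IsPseudoUnitary signatureOneOne A) :
    ∃ u v α : ℍ[ℝ], ‖u‖ = 1 ∧ ‖v‖ = 1 ∧ ‖α‖ < 1 ∧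
      ∀ q, linearFractional A q = v⁻¹ * (1 - q * star α)⁻¹ * (q - α) * u := by
  have ha : 0 < ‖A 0 0‖ := (norm_nonneg _).trans_lt hA.norm_apply_one_zero_lt
  refine ⟨‖A 0 0‖⁻¹ • A 0 0, ‖A 0 0‖⁻¹ • A 1 1, numRoot A, ?_, ?_, ?_, fun q ↦ ?_⟩
  · rw [norm_smul, norm_inv, norm_norm, inv_mul_cancel₀ ha.ne']
  · rw [norm_smul, norm_inv, norm_norm, hA.norm_apply_one_one, inv_mul_cancel₀ ha.ne']
  · rw [numRoot, norm_neg, norm_mul, norm_inv, mul_inv_lt_iff₀ ha, one_mul]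
    exact hA.norm_apply_one_zero_lt
  · rw [apply_eq_of_isPseudoUnitary hA (norm_pos_iff.1 ha), smul_inv₀, inv_inv]
    simp only [smul_mul_assoc, mul_smul_comm, inv_smul_smul₀ ha.ne']

end IsPseudoUnitary

end Quaternion

/-- A matrix `A = [[a,c],[b,d]] ∈ Sp(1,1)` (i.e. `Aᴴ H A = H` with `H = [[1,0],[0,−1]]`)
induces a linear fractional transformation mapping the unit ball `𝔹` bijectively onto itself,
of the form `q ↦ v⁻¹(1 − q·conj α)⁻¹(q − α)u` with `|u| = |v| = 1`, `α ∈ 𝔹`. -/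
theorem moebius_transformation_of_ball (a c b d : ℍ[ℝ])
    (hA : !![a, c; b, d]ᴴ * !![(1 : ℍ[ℝ]), 0; 0, -1] * !![a, c; b, d] =
      !![(1 : ℍ[ℝ]), 0; 0, -1]) :
    (∀ q : ℍ[ℝ], ‖q‖ < 1 → q * c + d ≠ 0) ∧
      Set.BijOn (fun q : ℍ[ℝ] => (q * c + d)⁻¹ * (q * a + b))
        (Metric.ball 0 1) (Metric.ball 0 1) ∧
      ∃ u v α : ℍ[ℝ], ‖u‖ = 1 ∧ ‖v‖ = 1 ∧ ‖α‖ < 1 ∧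
        ∀ q ∈ Metric.ball (0 : ℍ[ℝ]) 1,
          (q * c + d)⁻¹ * (q * a + b) = v⁻¹ * (1 - q * star α)⁻¹ * (q - α) * u := by
  have hSp : IsPseudoUnitary signatureOneOne !![a, c; b, d] := hA
  obtain ⟨u, v, α, hu, hv, hα, hF⟩ := hSp.exists_linearFractional_eq
  exact ⟨fun _ ↦ hSp.denom_ne_zero, hSp.bijOn_ball, u, v, α, hu, hv, hα, fun q _ ↦ hF q⟩
end
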